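/- arXiv:2502.05116 — 4 statements merged into one kernel-verified Lean document; each statement's English description precedes it below -/
import Mathlib

section
/- Let S and A be nonempty finite types, P : S → A → S → ℝ a transition kernel (P s a s' ≥ 0 for all s', and ∑_{s'} P s a s' = 1 for every pair (s,a)), r : S → A → ℝ, γ a real number with 0 ≤ γ < 1, and ε : S → A → ℝ. Define the VDN Bellman operator H by (H Q) s a = ∑_{s'} P s a s' * (r s a + γ * max_{a'} (Q s' a' + ε s' a')) − ε s a. Then there exists a unique function Q* : S → A → ℝ satisfying H Q* = Q*. -/
/-- The VDN Bellman operator has a unique fixed point. -/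
theorem vdn_bellman_unique_fixed_point
    {S A : Type*} [Fintype S] [Fintype A] [Nonempty S] [Nonempty A]
    (P : S → A → S → ℝ) (r : S → A → ℝ) (γ : ℝ) (ε : S → A → ℝ)
    (hP0 : ∀ s a s', 0 ≤ P s a s')
    (hP1 : ∀ s a, ∑ s', P s a s' = 1)
    (hγ0 : 0 ≤ γ) (hγ1 : γ < 1)
    (H : (S → A → ℝ) → (S → A → ℝ))
    (hH : ∀ Q s a, H Q s a =
      (∑ s', P s a s' *
        (r s a + γ * Finset.univ.sup' Finset.univ_nonempty
          (fun a' => Q s' a' + ε s' a'))) - ε s a) :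
    ∃! Qstar : S → A → ℝ, H Qstar = Qstar := by
  have key : ∀ Q₁ Q₂ : S → A → ℝ, ∀ s a, H Q₁ s a ≤ H Q₂ s a + γ * dist Q₁ Q₂ := by
    intro Q₁ Q₂ s a
    have hpt : ∀ s' a', Q₁ s' a' ≤ Q₂ s' a' + dist Q₁ Q₂ := by
      intro s' a'
      have h1 : dist (Q₁ s' a') (Q₂ s' a') ≤ dist Q₁ Q₂ :=
        (dist_le_pi_dist (Q₁ s') (Q₂ s') a').trans (dist_le_pi_dist Q₁ Q₂ s')
      rw [Real.dist_eq] at h1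
      linarith [le_abs_self (Q₁ s' a' - Q₂ s' a')]
    have hsup : ∀ s', Finset.univ.sup' Finset.univ_nonempty (fun a' => Q₁ s' a' + ε s' a') ≤
        Finset.univ.sup' Finset.univ_nonempty (fun a' => Q₂ s' a' + ε s' a') + dist Q₁ Q₂ := by
      intro s'
      apply Finset.sup'_le
      intro a' _
      have h2 := Finset.le_sup' (fun a' => Q₂ s' a' + ε s' a') (Finset.mem_univ a')
      have h3 := hpt s' a'
      linarith
    have hsum : ∑ s', P s a s' * (r s a + γ * Finset.univ.sup' Finset.univ_nonempty
          (fun a' => Q₁ s' a' + ε s' a')) ≤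
        ∑ s', (P s a s' * (r s a + γ * Finset.univ.sup' Finset.univ_nonempty
          (fun a' => Q₂ s' a' + ε s' a')) + P s a s' * (γ * dist Q₁ Q₂)) := by
      apply Finset.sum_le_sum
      intro s' _
      rw [← mul_add]
      apply mul_le_mul_of_nonneg_left _ (hP0 s a s')
      have h4 := mul_le_mul_of_nonneg_left (hsup s') hγ0
      linarith
    rw [Finset.sum_add_distrib, ← Finset.sum_mul, hP1, one_mul] at hsum
    rw [hH, hH]
    linarith
  have hc : ContractingWith ⟨γ, hγ0⟩ H := by
    refine ⟨by exact_mod_cast hγ1, LipschitzWith.of_dist_le_mul fun Q₁ Q₂ => ?_⟩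
    change dist (H Q₁) (H Q₂) ≤ γ * dist Q₁ Q₂
    have hnn : 0 ≤ γ * dist Q₁ Q₂ := mul_nonneg hγ0 dist_nonneg
    refine (dist_pi_le_iff hnn).2 fun s => (dist_pi_le_iff hnn).2 fun a => ?_
    have h1 := key Q₁ Q₂ s a
    have h2 := key Q₂ Q₁ s a
    rw [dist_comm Q₂ Q₁] at h2
    rw [Real.dist_eq, abs_le]
    constructor <;> linarith
  exact ⟨ContractingWith.fixedPoint H hc, hc.fixedPoint_isFixedPt,
    fun y hy => hc.fixedPoint_unique hy⟩
end

section
/- Let S and A be nonempty finite types, P : S → A → S → ℝ a transition kernel (P s a s' ≥ 0 for all s', and ∑_{s'} P s a s' = 1 for every pair (s,a)), r : S → A → ℝ, γ a real number with 0 ≤ γ < 1, and ε : S → A → ℝ. Define the VDN Bellman operator H by (H Q) s a = ∑_{s'} P s a s' * (r s a + γ * max_{a'} (Q s' a' + ε s' a')) − ε s a, and let Q* be its unique fixed point. Then for every initial function Q₀ : S → A → ℝ and every natural number n, the n-th iterate H^[n] Q₀ satisfies max_{(s,a)} |(H^[n] Q₀) s a − Q* s a| ≤ γ^n * max_{(s,a)}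 |Q₀ s a − Q* s a|; in particular, the iterates H^[n] Q₀ converge to Q* in the sup norm as n → ∞. -/
/-- Iterates of the VDN Bellman operator converge geometrically
to its unique fixed point in the sup norm. -/
theorem vdn_bellman_iterates_converge
    {S A : Type*} [Fintype S] [Fintype A] [Nonempty S] [Nonempty A]
    (P : S → A → S → ℝ) (r : S → A → ℝ) (γ : ℝ) (ε : S → A → ℝ)
    (hP0 : ∀ s a s', 0 ≤ P s a s')
    (hP1 : ∀ s a, ∑ s', P s a s' = 1)
    (hγ0 : 0 ≤ γ) (hγ1 : γ < 1)
    (H : (S → A → ℝ) → (S → A → ℝ))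
    (hH : ∀ Q s a, H Q s a =
      (∑ s', P s a s' *
        (r s a + γ * Finset.univ.sup' Finset.univ_nonempty
          (fun a' => Q s' a' + ε s' a'))) - ε s a)
    (Qstar : S → A → ℝ) (hQstar : H Qstar = Qstar) :
    (∀ Q₀ : S → A → ℝ, ∀ n : ℕ,
      Finset.univ.sup' Finset.univ_nonempty
        (fun p : S × A => |(H^[n] Q₀) p.1 p.2 - Qstar p.1 p.2|)
      ≤ γ ^ n * Finset.univ.sup' Finset.univ_nonempty
        (fun p : S × A => |Q₀ p.1 p.2 - Qstar p.1 p.2|)) ∧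
    (∀ Q₀ : S → A → ℝ,
      Filter.Tendsto
        (fun n : ℕ => Finset.univ.sup' Finset.univ_nonempty
          (fun p : S × A => |(H^[n] Q₀) p.1 p.2 - Qstar p.1 p.2|))
        Filter.atTop (nhds 0)) := by
  have hsup : ∀ (Q R : S → A → ℝ) (c : ℝ), (∀ s a, Q s a ≤ R s a + c) → ∀ s,
      Finset.univ.sup' Finset.univ_nonempty (fun a' => Q s a' + ε s a') ≤
      Finset.univ.sup' Finset.univ_nonempty (fun a' => R s a' + ε s a') + c := by
    intro Q R c h s
    apply Finset.sup'_le
    intro a _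
    have h1 := Finset.le_sup' (fun a' => R s a' + ε s a') (Finset.mem_univ a)
    have h2 := h s a
    linarith
  have hmono : ∀ (Q R : S → A → ℝ) (c : ℝ), (∀ s a, Q s a ≤ R s a + c) → ∀ s a,
      H Q s a ≤ H R s a + γ * c := by
    intro Q R c h s a
    rw [hH, hH]
    have h1 : γ * c = ∑ s', P s a s' * (γ * c) := by
      rw [← Finset.sum_mul, hP1, one_mul]
    have h2 : ∑ s', P s a s' * (r s a + γ * Finset.univ.sup' Finset.univ_nonempty
          (fun a' => Q s' a' + ε s' a')) ≤
        ∑ s', P s a s' * (r s a + γ * Finset.univ.sup' Finset.univ_nonempty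
          (fun a' => R s' a' + ε s' a')) + ∑ s', P s a s' * (γ * c) := by
      rw [← Finset.sum_add_distrib]
      apply Finset.sum_le_sum
      intro s' _
      rw [← mul_add]
      apply mul_le_mul_of_nonneg_left _ (hP0 s a s')
      have h3 := mul_le_mul_of_nonneg_left (hsup Q R c h s') hγ0
      linarith
    linarith
  have hiter : ∀ (Q₀ : S → A → ℝ) (c : ℝ), (∀ s a, |Q₀ s a - Qstar s a| ≤ c) → ∀ n s a,
      |(H^[n] Q₀) s a - Qstar s a| ≤ γ ^ n * c := by
    intro Q₀ c h n
    induction n with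
    | zero => simpa using h
    | succ k ih =>
      intro s a
      rw [Function.iterate_succ_apply']
      have h1 := hmono (H^[k] Q₀) Qstar (γ ^ k * c)
        (fun s a => by have := (abs_le.1 (ih s a)).2; linarith) s a
      have h2 := hmono Qstar (H^[k] Q₀) (γ ^ k * c)
        (fun s a => by have := (abs_le.1 (ih s a)).1; linarith) s a
      rw [hQstar] at h1 h2
      have h3 : γ ^ (k + 1) * c = γ * (γ ^ k * c) := by ring
      rw [h3, abs_le]
      constructor <;> linarith
  have main : ∀ Q₀ : S → A → ℝ, ∀ n : ℕ,
      Finset.univ.sup' Finset.univ_nonempty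
        (fun p : S × A => |(H^[n] Q₀) p.1 p.2 - Qstar p.1 p.2|)
      ≤ γ ^ n * Finset.univ.sup' Finset.univ_nonempty
        (fun p : S × A => |Q₀ p.1 p.2 - Qstar p.1 p.2|) := by
    intro Q₀ n
    apply Finset.sup'_le
    intro p _
    exact hiter Q₀ _ (fun s a => Finset.le_sup'
      (fun p : S × A => |Q₀ p.1 p.2 - Qstar p.1 p.2|) (Finset.mem_univ (s, a))) n p.1 p.2
  refine ⟨main, fun Q₀ => ?_⟩
  refine squeeze_zero (fun n => ?_) (main Q₀) ?_
  · obtain ⟨p⟩ : Nonempty (S × A) := inferInstance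
    exact (abs_nonneg _).trans (Finset.le_sup'
      (fun p : S × A => |(H^[n] Q₀) p.1 p.2 - Qstar p.1 p.2|) (Finset.mem_univ p))
  · simpa using (tendsto_pow_atTop_nhds_zero_of_lt_one hγ0 hγ1).mul_const
      (Finset.univ.sup' Finset.univ_nonempty
        (fun p : S × A => |Q₀ p.1 p.2 - Qstar p.1 p.2|))
end

section
/- Let S and A be nonempty finite types, P : S → A → S → ℝ a transition kernel (P s a s' ≥ 0 for all s', and ∑_{s'} P s a s' = 1 for every pair (s,a)), r : S → A → ℝ, γ a real number with 0 ≤ γ < 1, and ε : S → A → ℝ. Let Q*_ε be the unique fixed point of the VDN Bellman operator (H Q) s a = ∑_{s'} P s a s' * (r s a + γ * max_{a'} (Q s' a' + ε s' a')) − ε s a, and let Q* be the unique fixed point of the standard Bellman optimality operator (T Q) s a = ∑_{s'} P s a s' * (r s a + γ * max_{a'} Q s' a'). Then max_{(s,a)} |Q*_ε s a − Q* s a| = max_{(s,a)} |ε s a|. In particular, if ε = 0 then Q*_ε = Q*, so when the value-decomposition error vanishes the VDN method converges to the actual optimal global Q-function. -/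
theorem vdn_aux_sup_le {A : Type*} [Fintype A] [Nonempty A] (f g : A → ℝ) (D : ℝ)
    (h : ∀ a, f a ≤ g a + D) :
    Finset.univ.sup' Finset.univ_nonempty f ≤ Finset.univ.sup' Finset.univ_nonempty g + D := by
  apply Finset.sup'_le
  intro a _
  have := Finset.le_sup' g (Finset.mem_univ a)
  linarith [h a]

theorem vdn_aux_le {S A : Type*} [Fintype S] [Fintype A] [Nonempty S] [Nonempty A]
    (P : S → A → S → ℝ) (r : S → A → ℝ) (γ : ℝ)
    (hP0 : ∀ s a s', 0 ≤ P s a s')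
    (hP1 : ∀ s a, ∑ s', P s a s' = 1)
    (hγ0 : 0 ≤ γ) (hγ1 : γ < 1) (Q R : S → A → ℝ)
    (hQ : ∀ s a, Q s a = ∑ s', P s a s' *
        (r s a + γ * Finset.univ.sup' Finset.univ_nonempty (fun a' => Q s' a')))
    (hR : ∀ s a, R s a = ∑ s', P s a s' *
        (r s a + γ * Finset.univ.sup' Finset.univ_nonempty (fun a' => R s' a'))) :
    ∀ s a, Q s a ≤ R s a := by
  obtain ⟨⟨s0, a0⟩, h0⟩ := Finite.exists_max (fun p : S × A => Q p.1 p.2 - R p.1 p.2)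
  obtain ⟨D, hD⟩ : ∃ D, D = Q s0 a0 - R s0 a0 := ⟨_, rfl⟩
  have hle : ∀ s a, Q s a ≤ R s a + D := by
    intro s a
    have := h0 (s, a)
    simp only at this
    linarith
  have key : Q s0 a0 ≤ R s0 a0 + γ * D := by
    have e : R s0 a0 + γ * D = ∑ s', P s0 a0 s' *
        (r s0 a0 + γ * (Finset.univ.sup' Finset.univ_nonempty (fun a' => R s' a') + D)) := by
      rw [hR s0 a0]
      calc _ = _ + (∑ s', P s0 a0 s') * (γ * D) := by rw [hP1, one_mul]
        _ = _ := by
          rw [Finset.sum_mul, ← Finset.sum_add_distrib]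
          exact Finset.sum_congr rfl fun _ _ => by ring
    rw [e, hQ s0 a0]
    refine Finset.sum_le_sum fun s' _ => mul_le_mul_of_nonneg_left ?_ (hP0 _ _ _)
    have := mul_le_mul_of_nonneg_left (vdn_aux_sup_le _ _ D (hle s')) hγ0
    linarith
  have hD0 : D ≤ 0 := by
    by_contra hc
    push Not at hc
    nlinarith
  intro s a
  linarith [hle s a]

/-- The distance (in the sup norm) between the fixed point of the
VDN Bellman operator and the fixed point of the standard Bellman optimality
operator equals the sup norm of the decomposition error ε; in particular,
when ε = 0 the two fixed points coincide. -/
theorem vdn_fixed_point_error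
    {S A : Type*} [Fintype S] [Fintype A] [Nonempty S] [Nonempty A]
    (P : S → A → S → ℝ) (r : S → A → ℝ) (γ : ℝ) (ε : S → A → ℝ)
    (hP0 : ∀ s a s', 0 ≤ P s a s')
    (hP1 : ∀ s a, ∑ s', P s a s' = 1)
    (hγ0 : 0 ≤ γ) (hγ1 : γ < 1)
    (H : (S → A → ℝ) → (S → A → ℝ))
    (hH : ∀ Q s a, H Q s a =
      (∑ s', P s a s' *
        (r s a + γ * Finset.univ.sup' Finset.univ_nonempty
          (fun a' => Q s' a' + ε s' a'))) - ε s a)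
    (T : (S → A → ℝ) → (S → A → ℝ))
    (hT : ∀ Q s a, T Q s a =
      ∑ s', P s a s' *
        (r s a + γ * Finset.univ.sup' Finset.univ_nonempty
          (fun a' => Q s' a')))
    (Qε : S → A → ℝ) (hQε : H Qε = Qε)
    (Qstar : S → A → ℝ) (hQstar : T Qstar = Qstar) :
    Finset.univ.sup' Finset.univ_nonempty
      (fun p : S × A => |Qε p.1 p.2 - Qstar p.1 p.2|)
    = Finset.univ.sup' Finset.univ_nonempty
      (fun p : S × A => |ε p.1 p.2|) ∧
    ((ε = fun _ _ => 0) → Qε = Qstar) := by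
  have h1 : ∀ s a, Qε s a + ε s a = ∑ s', P s a s' *
        (r s a + γ * Finset.univ.sup' Finset.univ_nonempty
          (fun a' => Qε s' a' + ε s' a')) := by
    intro s a
    have := hH Qε s a
    rw [hQε] at this
    linarith
  have h2 : ∀ s a, Qstar s a = ∑ s', P s a s' *
        (r s a + γ * Finset.univ.sup' Finset.univ_nonempty (fun a' => Qstar s' a')) := by
    intro s a
    have := hT Qstar s a
    rwa [hQstar] at this
  have h3 : ∀ s a, Qε s a + ε s a = Qstar s a := fun s a => le_antisymm
    (vdn_aux_le P r γ hP0 hP1 hγ0 hγ1 (fun s a => Qε s a + ε s a) Qstar h1 h2 s a)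
    (vdn_aux_le P r γ hP0 hP1 hγ0 hγ1 Qstar (fun s a => Qε s a + ε s a) h2 h1 s a)
  constructor
  · congr 1
    funext p
    rw [← h3, ← abs_neg]
    congr 1
    ring
  · intro h
    funext s a
    rw [← h3, h, add_zero]
end

section
/- Let S and A be nonempty finite types, P : S → A → S → ℝ a transition kernel (P s a s' ≥ 0 for all s', and ∑_{s'} P s a s' = 1 for every pair (s,a)), r : S → A → ℝ, and γ a real number with 0 ≤ γ < 1. For a decomposition error ε : S → A → ℝ, write H_ε for the VDN Bellman operator (H_ε Q) s a = ∑_{s'} P s a s' * (r s a + γ * max_{a'} (Q s' a' + ε s' a')) − ε s a. Then for any Q₁, Q₂, ε₁, ε₂ : S → A → ℝ, max_{(s,a)} |(H_{ε₁} Q₁) s a − (H_{ε₂} Q₂) s a| ≤ γ * max_{(s,a)} |(Q₁ s a + ε₁ s a) − (Q₂ s a + ε₂ s a)| + max_{(s,a)} |ε₁ s a − ε₂ s a|; consequently, max_{(s,a)} |(H_{ε₁} Q₁) s a − (H_{ε₂} Q₂) s a| ≤ γ * max_{(s,a)} |Q₁ s a − Q₂ s a| + (1 + γ) * max_{(s,a)}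 |ε₁ s a − ε₂ s a|. -/
theorem vdn_aux {S A : Type*} [Fintype S] [Fintype A] [Nonempty A]
    (p : S → ℝ) (c γ D : ℝ) (h0 : ∀ s, 0 ≤ p s) (h1 : ∑ s, p s = 1) (hγ : 0 ≤ γ)
    (f g : S → A → ℝ) (h : ∀ s a, f s a ≤ g s a + D) :
    ∑ s, p s * (c + γ * Finset.univ.sup' Finset.univ_nonempty (fun a => f s a))
      ≤ ∑ s, p s * (c + γ * Finset.univ.sup' Finset.univ_nonempty (fun a => g s a)) + γ * D := by
  have e : γ * D = ∑ s, p s * (γ * D) := by rw [← Finset.sum_mul, h1, one_mul]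
  rw [e, ← Finset.sum_add_distrib]
  refine Finset.sum_le_sum fun s _ => ?_
  rw [← mul_add]
  refine mul_le_mul_of_nonneg_left ?_ (h0 s)
  have : Finset.univ.sup' Finset.univ_nonempty (fun a => f s a)
      ≤ Finset.univ.sup' Finset.univ_nonempty (fun a => g s a) + D := by
    refine Finset.sup'_le _ _ fun a _ => ?_
    have := Finset.le_sup' (fun a => g s a) (Finset.mem_univ a)
    have := h s a
    linarith
  have := mul_le_mul_of_nonneg_left this hγ
  linarith

/-- Quantitative perturbation estimate for VDN Bellman updates
under two decomposition errors. -/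
theorem vdn_bellman_perturbation_bound
    {S A : Type*} [Fintype S] [Fintype A] [Nonempty S] [Nonempty A]
    (P : S → A → S → ℝ) (r : S → A → ℝ) (γ : ℝ)
    (hP0 : ∀ s a s', 0 ≤ P s a s')
    (hP1 : ∀ s a, ∑ s', P s a s' = 1)
    (hγ0 : 0 ≤ γ) (hγ1 : γ < 1)
    (H : (S → A → ℝ) → (S → A → ℝ) → (S → A → ℝ))
    (hH : ∀ (ε Q : S → A → ℝ) (s : S) (a : A), H ε Q s a =
      (∑ s', P s a s' *
        (r s a + γ * Finset.univ.sup' Finset.univ_nonempty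
          (fun a' => Q s' a' + ε s' a'))) - ε s a) :
    ∀ Q₁ Q₂ ε₁ ε₂ : S → A → ℝ,
      (Finset.univ.sup' Finset.univ_nonempty
        (fun p : S × A => |H ε₁ Q₁ p.1 p.2 - H ε₂ Q₂ p.1 p.2|)
      ≤ γ * Finset.univ.sup' Finset.univ_nonempty
          (fun p : S × A => |(Q₁ p.1 p.2 + ε₁ p.1 p.2) - (Q₂ p.1 p.2 + ε₂ p.1 p.2)|)
        + Finset.univ.sup' Finset.univ_nonempty
          (fun p : S × A => |ε₁ p.1 p.2 - ε₂ p.1 p.2|)) ∧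
      (Finset.univ.sup' Finset.univ_nonempty
        (fun p : S × A => |H ε₁ Q₁ p.1 p.2 - H ε₂ Q₂ p.1 p.2|)
      ≤ γ * Finset.univ.sup' Finset.univ_nonempty
          (fun p : S × A => |Q₁ p.1 p.2 - Q₂ p.1 p.2|)
        + (1 + γ) * Finset.univ.sup' Finset.univ_nonempty
          (fun p : S × A => |ε₁ p.1 p.2 - ε₂ p.1 p.2|)) := by
  intro Q₁ Q₂ ε₁ ε₂
  obtain ⟨D, hDd⟩ : ∃ D, D = Finset.univ.sup' Finset.univ_nonempty
      (fun p : S × A => |(Q₁ p.1 p.2 + ε₁ p.1 p.2) - (Q₂ p.1 p.2 + ε₂ p.1 p.2)|) := ⟨_, rfl⟩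
  obtain ⟨E, hEd⟩ : ∃ E, E = Finset.univ.sup' Finset.univ_nonempty
      (fun p : S × A => |ε₁ p.1 p.2 - ε₂ p.1 p.2|) := ⟨_, rfl⟩
  obtain ⟨K, hKd⟩ : ∃ K, K = Finset.univ.sup' Finset.univ_nonempty
      (fun p : S × A => |Q₁ p.1 p.2 - Q₂ p.1 p.2|) := ⟨_, rfl⟩
  have hD : ∀ s a, |(Q₁ s a + ε₁ s a) - (Q₂ s a + ε₂ s a)| ≤ D := fun s a => hDd ▸
    Finset.le_sup' (fun p : S × A => |(Q₁ p.1 p.2 + ε₁ p.1 p.2) - (Q₂ p.1 p.2 + ε₂ p.1 p.2)|)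
      (Finset.mem_univ (s, a))
  have hE : ∀ s a, |ε₁ s a - ε₂ s a| ≤ E := fun s a => hEd ▸
    Finset.le_sup' (fun p : S × A => |ε₁ p.1 p.2 - ε₂ p.1 p.2|) (Finset.mem_univ (s, a))
  have hQ : ∀ s a, |Q₁ s a - Q₂ s a| ≤ K := fun s a => hKd ▸
    Finset.le_sup' (fun p : S × A => |Q₁ p.1 p.2 - Q₂ p.1 p.2|) (Finset.mem_univ (s, a))
  have hDle : D ≤ K + E := by
    rw [hDd]
    refine Finset.sup'_le _ _ fun p _ => ?_
    have e : (Q₁ p.1 p.2 + ε₁ p.1 p.2) - (Q₂ p.1 p.2 + ε₂ p.1 p.2)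
      = (Q₁ p.1 p.2 - Q₂ p.1 p.2) + (ε₁ p.1 p.2 - ε₂ p.1 p.2) := by ring
    rw [e]
    exact (abs_add_le _ _).trans (add_le_add (hQ p.1 p.2) (hE p.1 p.2))
  rw [← hDd, ← hEd, ← hKd]
  have main : Finset.univ.sup' Finset.univ_nonempty
      (fun p : S × A => |H ε₁ Q₁ p.1 p.2 - H ε₂ Q₂ p.1 p.2|) ≤ γ * D + E := by
    refine Finset.sup'_le _ _ fun p _ => ?_
    obtain ⟨s, a⟩ := p
    simp only [hH]
    have h1 := vdn_aux (P s a) (r s a) γ D (hP0 s a) (hP1 s a) hγ0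
      (fun s a => Q₁ s a + ε₁ s a) (fun s a => Q₂ s a + ε₂ s a)
      (fun s a => by have := abs_le.1 (hD s a); linarith [this.2])
    have h2 := vdn_aux (P s a) (r s a) γ D (hP0 s a) (hP1 s a) hγ0
      (fun s a => Q₂ s a + ε₂ s a) (fun s a => Q₁ s a + ε₁ s a)
      (fun s a => by have := abs_le.1 (hD s a); linarith [this.1])
    have h3 := abs_le.1 (hE s a)
    rw [abs_le]
    constructor <;> linarith [h3.1, h3.2]
  refine ⟨main, main.trans ?_⟩
  have := mul_le_mul_of_nonneg_left hDle hγ0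
  linarith
end
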